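/- Let π = s_i s_j be a product of two simple transpositions with i, j such that ℓ(π) = 2. Then the Schubert polynomial 𝔖_π is the sum of the monomials x_{r_1} x_{r_2} over the compatible sequences (𝐚,𝐫) of π, i.e. 𝔖_π = Σ over compatible sequences (𝐚,𝐫) of π of x_{r_1} x_{r_2}. -/

import Mathlib

open MvPolynomial Classical

/-- The action of the simple transposition `s_i` on polynomials, swapping `x_i` and `x_{i+1}`
(variables are 0-indexed: `X i` stands for `x_{i+1}`). -/
noncomputable def swapPoly (i : ℕ) (f : MvPolynomial ℕ ℤ) : MvPolynomial ℕ ℤ :=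
  rename (Equiv.swap i (i + 1)) f

/-- The divided difference operator `∂_i f = (f - s_i f)/(x_i - x_{i+1})`. -/
noncomputable def dd (i : ℕ) (f : MvPolynomial ℕ ℤ) : MvPolynomial ℕ ℤ :=
  if h : (X i - X (i + 1)) ∣ (f - swapPoly i f) then h.choose else 0

/-- Coxeter length of a permutation of `Fin n`, as the number of inversions. -/
def lenF (n : ℕ) (π : Equiv.Perm (Fin n)) : ℕ :=
  (Finset.univ.filter fun p : Fin n × Fin n => p.1 < p.2 ∧ π p.2 < π p.1).card

/-- The simple transposition `s_{i+1}` of `S_n` (0-indexed: swaps positions `i` and `i+1`),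
junk value `1` if out of range. -/
def sFin (n i : ℕ) : Equiv.Perm (Fin n) :=
  if h : i + 1 < n then Equiv.swap ⟨i, by omega⟩ ⟨i + 1, h⟩ else 1

/-- `S` is the family of Schubert polynomials of `S_n`: `S w₀ = x_1^{n-1} ⋯ x_{n-1}` for the
longest element `w₀`, and `S π = ∂_i S_{π s_i}` whenever `ℓ(π) < ℓ(π s_i)`. -/
def SchubertProp (n : ℕ) (S : Equiv.Perm (Fin n) → MvPolynomial ℕ ℤ) : Prop :=
  S Fin.revPerm = (∏ i ∈ Finset.range n, X i ^ (n - 1 - i)) ∧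
  ∀ (π : Equiv.Perm (Fin n)) (i : ℕ), i + 1 < n →
    lenF n π < lenF n (π * sFin n i) → S π = dd i (S (π * sFin n i))

/-- `p = ((a₁, a₂), (r₁, r₂))` is a compatible sequence of `π`, for `π` of length 2. -/
def CompatPair (n : ℕ) (π : Equiv.Perm (Fin n)) (p : (ℕ × ℕ) × ℕ × ℕ) : Prop :=
  p.1.1 + 1 < n ∧ p.1.2 + 1 < n ∧ sFin n p.1.1 * sFin n p.1.2 = π ∧
  p.2.1 ≤ p.2.2 ∧ p.2.1 ≤ p.1.1 ∧ p.2.2 ≤ p.1.2 ∧ (p.1.1 < p.1.2 → p.2.1 < p.2.2)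

/-!
Let `ℓ` be the length and `h_d(m)` the complete homogeneous symmetric polynomial of degree `d` in
the first `m` variables. Every Schubert polynomial `𝔖_π` of `S_n` is homogeneous of degree `ℓ(π)`
and lies in the span of the divisors of `x₁ⁿ⁻¹ ⋯ xₙ₋₁`. A polynomial in `x₁, …, xₙ₋₁` killed by
`∂₁, …, ∂ₙ₋₁` is constant: if `x_l` is its last variable, invariance under `s_l` would make
`x_{l+1}` occur as well. Hence `𝔖_π` with `ℓ(π) > 0` is determined by its divided differences
`∂_k 𝔖_π`, which are `𝔖_{π s_k}` at the descents and `0` at the ascents of `π`.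

To start the recursion, `𝔖_1 = 1`: on the chain from `w₀` to `1` that always uses the first ascent,
all permutations are dominant and `∂_k` merely divides `x^{c(π)}` by `x_k`. As `∂_k h_d(m)` is
`h_{d-1}(m+1)` if `k = m` and `0` otherwise, comparing divided differences gives
`𝔖_{s_i} = h_1(i)`. In length two the compatible sequences with word `(a, b)` contribute `h_2(b)` if
`b < a` and `h_1(a) h_1(b) - h_2(a)` if `a < b`, and both sides have the same divided differences.
-/

theorem mem_of_mul_mem_of_left_mem {ι R S : Type*} [AddLeftCancelMonoid ι] [DecidableEq ι]
    [Semiring R] [IsLeftCancelMulZero R] [SetLike S R] [AddSubmonoidClass S R]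
    (𝒜 : ι → S) [GradedRing 𝒜] {a b : R} {i j : ι} (ha : a ∈ 𝒜 i) (ha0 : a ≠ 0)
    (hab : a * b ∈ 𝒜 (i + j)) : b ∈ 𝒜 j := by
  have hcomp := DirectSum.coe_decompose_mul_add_of_left_mem 𝒜 (b := b) (j := j) ha
  rw [DirectSum.decompose_of_mem_same 𝒜 hab] at hcomp
  rw [mul_left_cancel₀ ha0 hcomp]
  exact SetLike.coe_mem _

section DividedDifference

variable (k : ℕ) (f g : MvPolynomial ℕ ℤ)

theorem swapPoly_mul : swapPoly k (f * g) = swapPoly k f * swapPoly k g :=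
  map_mul _ f g

theorem swapPoly_sub : swapPoly k (f - g) = swapPoly k f - swapPoly k g :=
  map_sub _ f g

theorem swapPoly_X (l : ℕ) : swapPoly k (X l) = X (Equiv.swap k (k + 1) l) :=
  rename_X _ l

theorem swapPoly_swapPoly : swapPoly k (swapPoly k f) = f := by
  rw [swapPoly, swapPoly, rename_rename, ← Equiv.coe_trans, Equiv.swap_swap, Equiv.coe_refl,
    rename_id_apply]

theorem degreeOf_swapPoly (l : ℕ) :
    degreeOf l (swapPoly k f) = degreeOf (Equiv.swap k (k + 1) l) f := by
  simpa [swapPoly] using degreeOf_rename_of_injective (p := f) (Equiv.swap k (k + 1)).injective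
    (Equiv.swap k (k + 1) l)

theorem X_sub_X_succ_ne_zero : (X k - X (k + 1) : MvPolynomial ℕ ℤ) ≠ 0 :=
  sub_ne_zero.mpr fun h => k.succ_ne_self (X_injective h).symm

theorem X_sub_X_succ_dvd_sub_swapPoly : X k - X (k + 1) ∣ f - swapPoly k f := by
  induction f using MvPolynomial.induction_on with
  | C a => simp [swapPoly]
  | add p q hp hq =>
    simpa only [swapPoly, map_add, add_sub_add_comm] using dvd_add hp hq
  | mul_X p l hp =>
    have hX : (X k - X (k + 1) : MvPolynomial ℕ ℤ) ∣ X l - swapPoly k (X l) := by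
      rw [swapPoly_X, Equiv.swap_apply_def]
      split_ifs with hl hl
      · rw [hl]
      · rw [hl, ← dvd_neg, neg_sub]
      · simp
    have hLeibniz : p * X l - swapPoly k (p * X l)
        = (p - swapPoly k p) * X l + swapPoly k p * (X l - swapPoly k (X l)) := by
      rw [swapPoly_mul]; ring
    rw [hLeibniz]
    exact dvd_add (hp.mul_right _) (hX.mul_left _)

theorem X_sub_X_succ_mul_dd : (X k - X (k + 1)) * dd k f = f - swapPoly k f := by
  have h := X_sub_X_succ_dvd_sub_swapPoly k f
  rw [dd, dif_pos h]
  exact h.choose_spec.symm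

variable {k f g}

theorem dd_eq_iff : dd k f = g ↔ f - swapPoly k f = (X k - X (k + 1)) * g := by
  rw [← X_sub_X_succ_mul_dd, mul_right_inj' (X_sub_X_succ_ne_zero k)]

theorem dd_eq_zero_iff : dd k f = 0 ↔ swapPoly k f = f := by
  rw [dd_eq_iff, mul_zero, sub_eq_zero, eq_comm]

variable (k f g)

theorem swapPoly_dd : swapPoly k (dd k f) = dd k f := by
  have h := congrArg (swapPoly k) (X_sub_X_succ_mul_dd k f)
  simp only [swapPoly_mul, swapPoly_sub, swapPoly_X, swapPoly_swapPoly, Equiv.swap_apply_left,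
    Equiv.swap_apply_right] at h
  apply mul_left_cancel₀ (X_sub_X_succ_ne_zero k)
  linear_combination -h - X_sub_X_succ_mul_dd k f

theorem dd_dd : dd k (dd k f) = 0 :=
  dd_eq_zero_iff.mpr (swapPoly_dd k f)

theorem dd_zero : dd k 0 = 0 :=
  dd_eq_zero_iff.mpr (map_zero _)

theorem dd_one : dd k 1 = 0 :=
  dd_eq_zero_iff.mpr (map_one _)

theorem dd_add : dd k (f + g) = dd k f + dd k g := by
  rw [dd_eq_iff, mul_add, X_sub_X_succ_mul_dd, X_sub_X_succ_mul_dd, swapPoly, map_add]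
  exact add_sub_add_comm _ _ _ _

theorem dd_sub : dd k (f - g) = dd k f - dd k g := by
  rw [dd_eq_iff, mul_sub, X_sub_X_succ_mul_dd, X_sub_X_succ_mul_dd, swapPoly_sub]
  exact sub_sub_sub_comm _ _ _ _

theorem dd_mul : dd k (f * g) = dd k f * g + swapPoly k f * dd k g := by
  rw [dd_eq_iff, swapPoly_mul]
  linear_combination -g * X_sub_X_succ_mul_dd k f - swapPoly k f * X_sub_X_succ_mul_dd k g

theorem dd_X (l : ℕ) : dd k (X l) = if l = k then 1 else if l = k + 1 then -1 else 0 := by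
  rw [dd_eq_iff, swapPoly_X, Equiv.swap_apply_def]
  split_ifs with hl hl
  · rw [hl, mul_one]
  · rw [hl]; ring
  · ring

variable {k f g}

theorem dd_X_mul_of_swapPoly_eq (hf : swapPoly k f = f) : dd k (X k * f) = f := by
  rw [dd_mul, dd_X, if_pos rfl, dd_eq_zero_iff.mpr hf, one_mul, mul_zero, add_zero]

theorem isHomogeneous_dd {d : ℕ} (hf : f.IsHomogeneous (d + 1)) : (dd k f).IsHomogeneous d := by
  let _ := MvPolynomial.gradedAlgebra (σ := ℕ) (R := ℤ)
  refine mem_of_mul_mem_of_left_mem (homogeneousSubmodule ℕ ℤ)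
    ((isHomogeneous_X ℤ k).sub (isHomogeneous_X ℤ (k + 1))) (X_sub_X_succ_ne_zero k) ?_
  rw [X_sub_X_succ_mul_dd, add_comm]
  exact hf.sub hf.rename_isHomogeneous

theorem degreeOf_X_sub_X_succ_pos {l : ℕ} (hl : l = k ∨ l = k + 1) :
    0 < degreeOf l (X k - X (k + 1) : MvPolynomial ℕ ℤ) := by
  rw [Nat.pos_iff_ne_zero, ← mem_vars_iff_degreeOf_ne_zero, vars_sub_of_disjoint] <;>
    simp [vars_X, hl]

end DividedDifference

/-- Membership in the span of the monomials dividing `x₁ⁿ⁻¹ x₂ⁿ⁻² ⋯ xₙ₋₁`, which contains all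
Schubert polynomials of `S_n`. In the 0-indexed variables, `X l` has degree at most `n - 1 - l`, so
that it does not occur if `n ≤ l + 1`. -/
def IsStaircase (n : ℕ) (f : MvPolynomial ℕ ℤ) : Prop :=
  ∀ l, degreeOf l f ≤ n - 1 - l

theorem isStaircase_dd {n k : ℕ} {f : MvPolynomial ℕ ℤ} (hf : IsStaircase n f) (hk : k + 1 < n) :
    IsStaircase n (dd k f) := by
  intro l
  rcases eq_or_ne (dd k f) 0 with h0 | h0
  · simp [h0]
  have hmul := degreeOf_mul_eq (n := l) (X_sub_X_succ_ne_zero k) h0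
  have hsub : degreeOf l (f - swapPoly k f) ≤ _ := degreeOf_sub_le l f (swapPoly k f)
  rw [X_sub_X_succ_mul_dd] at hmul
  rw [degreeOf_swapPoly, Equiv.swap_apply_def] at hsub
  have hpos := degreeOf_X_sub_X_succ_pos (k := k) (l := l)
  have hl := hf l
  have hk₀ := hf k
  have hk₁ := hf (k + 1)
  split_ifs at hsub <;> omega

theorem IsStaircase.mem_supported {n : ℕ} {f : MvPolynomial ℕ ℤ} (hf : IsStaircase n f) :
    f ∈ supported ℤ {l | l + 1 < n} := by
  rw [MvPolynomial.mem_supported]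
  intro l hl
  have hdeg := hf l
  rw [Finset.mem_coe, mem_vars_iff_degreeOf_ne_zero] at hl
  simp only [Set.mem_ofPred_eq]
  omega

theorem eq_C_of_dd_eq_zero {n : ℕ} {f : MvPolynomial ℕ ℤ} (hf : f ∈ supported ℤ {l | l + 1 < n})
    (hdd : ∀ k, k + 1 < n → dd k f = 0) : f = C (constantCoeff f) := by
  refine vars_eq_empty_iff_eq_C.mp (Finset.not_nonempty_iff_eq_empty.mp fun hne => ?_)
  set l := f.vars.max' hne
  have hl : l ∈ f.vars := f.vars.max'_mem hne
  have hsymm := dd_eq_zero_iff.mp (hdd l (mem_supported.mp hf hl))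
  have hl' : l + 1 ∈ f.vars := by
    rwa [mem_vars_iff_degreeOf_ne_zero, ← hsymm, degreeOf_swapPoly, Equiv.swap_apply_right,
      ← mem_vars_iff_degreeOf_ne_zero]
  exact (f.vars.le_max' _ hl').not_gt l.lt_succ_self

theorem eq_of_dd_eq {n : ℕ} {f g : MvPolynomial ℕ ℤ} (hf : f ∈ supported ℤ {l | l + 1 < n})
    (hg : g ∈ supported ℤ {l | l + 1 < n}) (h0 : constantCoeff f = constantCoeff g)
    (hdd : ∀ k, k + 1 < n → dd k f = dd k g) : f = g := by
  have hC := eq_C_of_dd_eq_zero (sub_mem hf hg) fun k hk => by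
    rw [dd_sub, hdd k hk, sub_self]
  rwa [map_sub, h0, sub_self, map_zero, sub_eq_zero] at hC

section Permutation

variable {n i j k : ℕ} {π : Equiv.Perm (Fin n)}

theorem sFin_mul_self (n k : ℕ) : sFin n k * sFin n k = 1 := by
  unfold sFin
  split_ifs
  · exact Equiv.swap_mul_self _ _
  · exact one_mul 1

theorem sFin_sFin (n k : ℕ) (x : Fin n) : sFin n k (sFin n k x) = x :=
  DFunLike.congr_fun (sFin_mul_self n k) x

theorem val_sFin (hk : k + 1 < n) (x : Fin n) :
    (sFin n k x : ℕ) = if (x : ℕ) = k then k + 1 else if (x : ℕ) = k + 1 then k else x := by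
  simp only [sFin, dif_pos hk, Equiv.swap_apply_def, Fin.ext_iff]
  split_ifs <;> rfl

theorem val_sFin_eq_swap (hk : k + 1 < n) (x : Fin n) :
    (sFin n k x : ℕ) = Equiv.swap k (k + 1) (x : ℕ) := by
  rw [val_sFin hk, Equiv.swap_apply_def]

theorem sFin_apply_left (hk : k + 1 < n) : sFin n k ⟨k, by omega⟩ = ⟨k + 1, hk⟩ := by
  simp [Fin.ext_iff, val_sFin hk]

theorem sFin_apply_right (hk : k + 1 < n) : sFin n k ⟨k + 1, hk⟩ = ⟨k, by omega⟩ := by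
  simp [Fin.ext_iff, val_sFin hk]

theorem sFin_lt_sFin (hk : k + 1 < n) {x y : Fin n} (hxy : x < y)
    (h : ¬((x : ℕ) = k ∧ (y : ℕ) = k + 1)) : sFin n k x < sFin n k y := by
  rw [Fin.lt_def] at *
  rw [val_sFin hk, val_sFin hk]
  split_ifs <;> omega

/-- The ascents of `π`, indexed as in `sFin`: the `k` for which `π (k + 1)` is defined and exceeds
`π k`. -/
def IsAscent (π : Equiv.Perm (Fin n)) (k : ℕ) : Prop :=
  ∃ hk : k + 1 < n, π ⟨k, by omega⟩ < π ⟨k + 1, hk⟩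

theorem isAscent_one (hk : k + 1 < n) : IsAscent (1 : Equiv.Perm (Fin n)) k :=
  ⟨hk, Nat.lt_succ_self k⟩

theorem not_isAscent_mul_sFin (h : IsAscent π k) : ¬IsAscent (π * sFin n k) k := by
  rintro ⟨hk, hlt⟩
  rw [Equiv.Perm.mul_apply, Equiv.Perm.mul_apply, sFin_apply_left hk, sFin_apply_right hk] at hlt
  exact hlt.asymm h.2

theorem isAscent_sFin (hi : i + 1 < n) (hk : k + 1 < n) : IsAscent (sFin n i) k ↔ k ≠ i := by
  refine ⟨?_, fun hki => ⟨hk, sFin_lt_sFin hi k.lt_succ_self fun h => hki h.1⟩⟩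
  rintro h rfl
  exact not_isAscent_mul_sFin (isAscent_one hk) (by rwa [one_mul])

theorem sFin_inj (hi : i + 1 < n) (hj : j + 1 < n) : sFin n i = sFin n j ↔ i = j := by
  refine ⟨fun h => ?_, fun h => h ▸ rfl⟩
  rw [← not_ne_iff, ← isAscent_sFin hj hi, ← h, isAscent_sFin hi hi, not_ne_iff]

theorem sFin_commute (hi : i + 1 < n) (hj : j + 1 < n) (hij : i ≠ j + 1) (hji : j ≠ i + 1) :
    Commute (sFin n i) (sFin n j) := by
  ext x
  simp only [Equiv.Perm.mul_apply, val_sFin hi, val_sFin hj]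
  split_ifs <;> omega

theorem isAscent_sFin_mul_sFin (hi : i + 1 < n) (hj : j + 1 < n) (hk : k + 1 < n)
    (hkj : k ≠ j) (hki : k = i → i = j + 1 ∨ j = i + 1) :
    IsAscent (sFin n i * sFin n j) k := by
  refine ⟨hk, sFin_lt_sFin hi (sFin_lt_sFin hj k.lt_succ_self fun h => hkj h.1) ?_⟩
  rw [val_sFin hj, val_sFin hj]
  dsimp only
  split_ifs <;> omega

theorem sFin_mul_sFin_eq_iff {a b : ℕ} (hi : i + 1 < n) (hj : j + 1 < n) (ha : a + 1 < n)
    (hb : b + 1 < n) (hij : i ≠ j) :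
    sFin n a * sFin n b = sFin n i * sFin n j ↔
      a = i ∧ b = j ∨ a = j ∧ b = i ∧ i ≠ j + 1 ∧ j ≠ i + 1 := by
  constructor
  · intro h
    have hab : a ≠ b := by
      rintro rfl
      rw [sFin_mul_self, ← sFin_mul_self n j, mul_left_inj, sFin_inj hj hi] at h
      exact hij h.symm
    have hb_desc := not_isAscent_mul_sFin ((isAscent_sFin ha hb).mpr hab.symm)
    rw [h] at hb_desc
    by_cases hbj : b = j
    · rw [hbj, mul_left_inj, sFin_inj ha hi] at h
      exact Or.inl ⟨h, hbj⟩
    · have hbi := mt (isAscent_sFin_mul_sFin hi hj hb hbj) hb_desc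
      push Not at hbi
      obtain ⟨rfl, hfar, hfar'⟩ := hbi
      rw [sFin_commute hi hj hfar hfar', mul_left_inj, sFin_inj ha hj] at h
      exact Or.inr ⟨h, rfl, hfar, hfar'⟩
  · rintro (⟨rfl, rfl⟩ | ⟨rfl, rfl, hfar, hfar'⟩)
    · rfl
    · exact (sFin_commute hi hj hfar hfar').symm

-- The first ascent is chosen because the corresponding step preserves dominance, see
-- `IsDominant.mul_sFin`.
theorem exists_isAscent_forall_lt (hπ : ¬StrictAnti π) :
    ∃ k, ∃ h : IsAscent π k, ∀ l : Fin n, (l : ℕ) < k → π ⟨k, Nat.lt_of_succ_lt h.1⟩ < π l := by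
  have hne : {q : Fin n | ∃ p < q, π p < π q}.Nonempty := by
    simp only [StrictAnti, not_forall, not_lt] at hπ
    obtain ⟨p, q, hpq, hle⟩ := hπ
    exact ⟨q, p, hpq, hle.lt_of_ne (π.injective.ne hpq.ne)⟩
  obtain ⟨⟨_ | k, hk⟩, ⟨p, hpq, hlt⟩, hmin⟩ := WellFounded.has_min wellFounded_lt _ hne
  · exact absurd hpq (Nat.not_lt_zero _)
  have hanti : ∀ l : Fin n, (l : ℕ) < k → π ⟨k, by omega⟩ < π l := fun l hl =>
    (not_lt.mp fun h => hmin ⟨k, by omega⟩ ⟨l, hl, h⟩ k.lt_succ_self).lt_of_ne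
      (π.injective.ne (Fin.ne_of_gt hl))
  refine ⟨k, ⟨hk, lt_of_le_of_lt ?_ hlt⟩, hanti⟩
  rcases Nat.lt_succ_iff_lt_or_eq.mp hpq with hpk | hpk
  · exact (hanti p hpk).le
  · exact le_of_eq (congrArg π (Fin.ext hpk.symm))

theorem eq_revPerm_of_strictAnti (hπ : StrictAnti π) : π = Fin.revPerm := by
  ext1 x
  exact Fin.rev_eq_iff.mp (congrFun (Fin.rev_strictAnti.comp hπ).eq_id x)

/-- The Lehmer code of `π`: the number of inversions of `π` whose left position is `i`. -/
def lehmerCode (π : Equiv.Perm (Fin n)) (i : Fin n) : ℕ :=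
  (Finset.univ.filter fun j => i < j ∧ π j < π i).card

theorem lenF_eq_sum_lehmerCode (π : Equiv.Perm (Fin n)) : lenF n π = ∑ i, lehmerCode π i := by
  simp only [lenF, lehmerCode, Finset.card_filter, Fintype.sum_prod_type]

theorem lehmerCode_one (i : Fin n) : lehmerCode 1 i = 0 := by
  rw [lehmerCode, Finset.card_eq_zero, Finset.filter_eq_empty_iff]
  exact fun j _ h => h.1.asymm h.2

theorem lenF_one (n : ℕ) : lenF n 1 = 0 := by
  rw [lenF_eq_sum_lehmerCode, Finset.sum_eq_zero fun i _ => lehmerCode_one i]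

theorem lehmerCode_revPerm (i : Fin n) : lehmerCode Fin.revPerm i = n - 1 - i := by
  simp only [lehmerCode, Fin.revPerm_apply, Fin.rev_lt_rev, and_self]
  rw [← Fin.card_Ioi]
  congr 1
  ext j
  simp

theorem lehmerCode_mul_sFin (h : IsAscent π k) (i : Fin n) :
    lehmerCode (π * sFin n k) i = lehmerCode π (sFin n k i) + if (i : ℕ) = k then 1 else 0 := by
  obtain ⟨hk, hlt⟩ := h
  have hreindex : lehmerCode (π * sFin n k) i =
      (Finset.univ.filter fun j => i < sFin n k j ∧ π j < π (sFin n k i)).card := by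
    refine Finset.card_equiv (sFin n k) fun j => ?_
    rw [Finset.mem_filter_univ, Finset.mem_filter_univ, sFin_sFin]
    rfl
  rw [hreindex, lehmerCode]
  split_ifs with hi
  · rw [show i = ⟨k, by omega⟩ from Fin.ext hi]
    have hnotMem : (⟨k, Nat.lt_of_succ_lt hk⟩ : Fin n) ∉
        Finset.univ.filter fun j => ⟨k + 1, hk⟩ < j ∧ π j < π ⟨k + 1, hk⟩ := fun h =>
      (Finset.mem_filter.mp h).2.1.not_gt k.lt_succ_self
    rw [sFin_apply_left hk, ← Finset.card_insert_of_notMem hnotMem]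
    congr 1
    ext j
    simp only [Finset.mem_filter_univ, Finset.mem_insert]
    rcases eq_or_ne j ⟨k, by omega⟩ with rfl | hj
    · simpa [sFin_apply_left hk] using hlt
    · have hj' : (j : ℕ) ≠ k := fun h => hj (Fin.ext h)
      simp only [hj, false_or, Fin.lt_def (b := j), Fin.lt_def (b := sFin n k j), val_sFin hk]
      refine and_congr_left fun _ => ?_
      split_ifs <;> omega
  · rw [add_zero]
    congr 1
    refine Finset.filter_congr fun j _ => and_congr_left fun hj => ?_
    constructor <;> intro hij
    · rw [← sFin_sFin n k j]
      exact sFin_lt_sFin hk hij fun h => hi h.1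
    · rw [← sFin_sFin n k i]
      refine sFin_lt_sFin hk hij fun h => hj.not_gt ?_
      obtain rfl : j = ⟨k + 1, hk⟩ := Fin.ext h.2
      rwa [show sFin n k i = ⟨k, by omega⟩ from Fin.ext h.1]

theorem lenF_mul_sFin (h : IsAscent π k) : lenF n (π * sFin n k) = lenF n π + 1 := by
  have hone : ∑ i : Fin n, (if (i : ℕ) = k then 1 else 0) = 1 := by
    rw [Fintype.sum_eq_single ⟨k, Nat.lt_of_succ_lt h.1⟩ fun i hi => if_neg fun h => hi (Fin.ext h)]
    exact if_pos rfl
  simp only [lenF_eq_sum_lehmerCode, lehmerCode_mul_sFin h, Finset.sum_add_distrib, hone,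
    Equiv.sum_comp (sFin n k) (lehmerCode π)]

theorem lenF_sFin (hk : k + 1 < n) : lenF n (sFin n k) = 1 := by
  rw [← one_mul (sFin n k), lenF_mul_sFin (isAscent_one hk), lenF_one]

theorem lenF_sFin_mul_sFin (hi : i + 1 < n) (hj : j + 1 < n) (hij : i ≠ j) :
    lenF n (sFin n i * sFin n j) = 2 := by
  rw [lenF_mul_sFin ((isAscent_sFin hi hj).mpr hij.symm), lenF_sFin hi]

theorem lenF_le (π : Equiv.Perm (Fin n)) : lenF n π ≤ Fintype.card (Fin n × Fin n) :=
  Finset.card_le_univ _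

theorem revPerm_induction {P : Equiv.Perm (Fin n) → Prop} (rev : P Fin.revPerm)
    (ascent : ∀ (π : Equiv.Perm (Fin n)) (k : ℕ) (h : IsAscent π k),
      (∀ l : Fin n, (l : ℕ) < k → π ⟨k, Nat.lt_of_succ_lt h.1⟩ < π l) →
        P (π * sFin n k) → P π)
    (π : Equiv.Perm (Fin n)) : P π := by
  by_cases hπ : StrictAnti π
  · rwa [eq_revPerm_of_strictAnti hπ]
  · obtain ⟨k, hk, hmin⟩ := exists_isAscent_forall_lt hπ
    exact ascent π k hk hmin (revPerm_induction rev ascent (π * sFin n k))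
termination_by Fintype.card (Fin n × Fin n) - lenF n π
decreasing_by
  have hlen := lenF_mul_sFin hk
  have hle := lenF_le (π * sFin n k)
  omega

/-- Dominant permutations, those with weakly decreasing Lehmer code, encoded as avoidance of the
pattern 132. -/
def IsDominant (π : Equiv.Perm (Fin n)) : Prop :=
  ∀ p q r, p < q → q < r → π p < π r → ¬π r < π q

theorem isDominant_one : IsDominant (1 : Equiv.Perm (Fin n)) :=
  fun _ _ _ _ hqr _ => hqr.asymm

theorem IsDominant.mul_sFin (hπ : IsDominant π) (h : IsAscent π k)
    (hmin : ∀ l : Fin n, (l : ℕ) < k → π ⟨k, Nat.lt_of_succ_lt h.1⟩ < π l) :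
    IsDominant (π * sFin n k) := by
  obtain ⟨hk, hlt⟩ := h
  have eq_left {x : Fin n} (hx : (x : ℕ) = k) : π (sFin n k x) = π ⟨k + 1, hk⟩ := by
    rw [← sFin_apply_left hk, show x = ⟨k, by omega⟩ from Fin.ext hx]
  have eq_right {x : Fin n} (hx : (x : ℕ) = k + 1) : π (sFin n k x) = π ⟨k, by omega⟩ := by
    rw [← sFin_apply_right hk, show x = ⟨k + 1, hk⟩ from Fin.ext hx]
  intro p q r hpq hqr hpr hrq
  simp only [Equiv.Perm.mul_apply] at hpr hrq
  by_cases hpq' : (p : ℕ) = k ∧ (q : ℕ) = k + 1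
  · rw [eq_left hpq'.1] at hpr
    rw [eq_right hpq'.2] at hrq
    exact hlt.asymm (hpr.trans hrq)
  by_cases hqr' : (q : ℕ) = k ∧ (r : ℕ) = k + 1
  · have hpk : (p : ℕ) < k := hqr'.1 ▸ hpq
    have hp : sFin n k p = p := Fin.ext (by rw [val_sFin hk]; split_ifs <;> omega)
    rw [eq_right hqr'.2, hp] at hpr
    exact hpr.asymm (hmin p hpk)
  · exact hπ _ _ _ (sFin_lt_sFin hk hpq hpq') (sFin_lt_sFin hk hqr hqr') hpr hrq

theorem IsDominant.lehmerCode_eq_of_isAscent (hπ : IsDominant π) (h : IsAscent π k) :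
    lehmerCode π ⟨k, Nat.lt_of_succ_lt h.1⟩ = lehmerCode π ⟨k + 1, h.1⟩ := by
  obtain ⟨hk, hlt⟩ := h
  unfold lehmerCode
  congr 1
  refine Finset.filter_congr fun j _ => ⟨fun ⟨hj, hπj⟩ => ⟨?_, hπj.trans hlt⟩, fun ⟨hj, hπj⟩ => ?_⟩
  · refine lt_of_le_of_ne hj fun h => ?_
    subst h
    exact hπj.asymm hlt
  · have hkj : (⟨k, by omega⟩ : Fin n) < j := k.lt_succ_self.trans hj
    exact ⟨hkj, (not_lt.mp fun h => hπ _ _ _ (Nat.lt_succ_self k) hj h hπj).lt_of_ne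
      (π.injective.ne hkj.ne')⟩

theorem IsDominant.lehmerCode_sFin (hπ : IsDominant π) (h : IsAscent π k) (i : Fin n) :
    lehmerCode π (sFin n k i) = lehmerCode π i := by
  have hcode := hπ.lehmerCode_eq_of_isAscent h
  rw [sFin, dif_pos h.1, Equiv.swap_apply_def]
  split_ifs with hi hi
  · rw [hi, hcode]
  · rw [hi, hcode]
  · rfl

end Permutation

section CodeMonomial

variable {n : ℕ} {π : Equiv.Perm (Fin n)} {k : ℕ}

/-- The monomial `x^{c(π)}` whose exponent is the Lehmer code of `π`, equal to the Schubert
polynomial of `π` when `π` is dominant. -/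
noncomputable def codeMonomial (π : Equiv.Perm (Fin n)) : MvPolynomial ℕ ℤ :=
  ∏ i : Fin n, X (i : ℕ) ^ lehmerCode π i

theorem isHomogeneous_codeMonomial (π : Equiv.Perm (Fin n)) :
    (codeMonomial π).IsHomogeneous (lenF n π) := by
  rw [lenF_eq_sum_lehmerCode]
  exact IsHomogeneous.prod _ _ _ fun i _ => isHomogeneous_X_pow _ _

theorem codeMonomial_one : codeMonomial (1 : Equiv.Perm (Fin n)) = 1 := by
  simp [codeMonomial, lehmerCode_one]

theorem codeMonomial_revPerm :
    codeMonomial (Fin.revPerm (n := n)) = ∏ i ∈ Finset.range n, X i ^ (n - 1 - i) := by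
  simp only [codeMonomial, lehmerCode_revPerm]
  exact (Finset.prod_range fun i => (X i : MvPolynomial ℕ ℤ) ^ (n - 1 - i)).symm

theorem isStaircase_codeMonomial_revPerm : IsStaircase n (codeMonomial (Fin.revPerm (n := n))) := by
  intro l
  rw [codeMonomial_revPerm]
  calc degreeOf l (∏ i ∈ Finset.range n, (X i : MvPolynomial ℕ ℤ) ^ (n - 1 - i))
      ≤ ∑ i ∈ Finset.range n, degreeOf l ((X i : MvPolynomial ℕ ℤ) ^ (n - 1 - i)) :=
        degreeOf_prod_le _ _ _
    _ ≤ ∑ i ∈ Finset.range n, if l = i then n - 1 - i else 0 :=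
        Finset.sum_le_sum fun i _ => (degreeOf_pow_le l (X i) (n - 1 - i)).trans_eq <| by
          rw [degreeOf_X, mul_ite, mul_one, mul_zero]
    _ ≤ n - 1 - l := by
        rw [Finset.sum_ite_eq]
        split_ifs <;> omega

theorem IsDominant.codeMonomial_mul_sFin (hπ : IsDominant π) (h : IsAscent π k) :
    codeMonomial (π * sFin n k) = X k * codeMonomial π := by
  simp only [codeMonomial, lehmerCode_mul_sFin h, hπ.lehmerCode_sFin h, pow_add,
    Finset.prod_mul_distrib]
  rw [mul_comm, Fintype.prod_eq_single ⟨k, Nat.lt_of_succ_lt h.1⟩ fun i hi => ?_]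
  · simp
  · rw [if_neg fun h => hi (Fin.ext h), pow_zero]

theorem IsDominant.swapPoly_codeMonomial (hπ : IsDominant π) (h : IsAscent π k) :
    swapPoly k (codeMonomial π) = codeMonomial π := by
  simp only [codeMonomial, swapPoly, map_prod, map_pow, rename_X, ← val_sFin_eq_swap h.1]
  simpa only [hπ.lehmerCode_sFin h] using
    Equiv.prod_comp (sFin n k) fun i => (X (i : ℕ) : MvPolynomial ℕ ℤ) ^ lehmerCode π i

end CodeMonomial

namespace SchubertProp

variable {n : ℕ} {S : Equiv.Perm (Fin n) → MvPolynomial ℕ ℤ} {π : Equiv.Perm (Fin n)} {k : ℕ}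

theorem apply_revPerm (hS : SchubertProp n S) :
    S Fin.revPerm = codeMonomial (Fin.revPerm (n := n)) :=
  hS.1.trans codeMonomial_revPerm.symm

theorem dd_apply_mul_sFin (hS : SchubertProp n S) (h : IsAscent π k) :
    dd k (S (π * sFin n k)) = S π :=
  (hS.2 π k h.1 (by rw [lenF_mul_sFin h]; exact Nat.lt_succ_self _)).symm

theorem dd_apply_eq_zero (hS : SchubertProp n S) (h : IsAscent π k) : dd k (S π) = 0 := by
  rw [← hS.dd_apply_mul_sFin h, dd_dd]

theorem isHomogeneous (hS : SchubertProp n S) (π : Equiv.Perm (Fin n)) :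
    (S π).IsHomogeneous (lenF n π) := by
  induction π using revPerm_induction with
  | rev => rw [hS.apply_revPerm]; exact isHomogeneous_codeMonomial _
  | ascent π k h _ ih =>
    rw [← hS.dd_apply_mul_sFin h]
    exact isHomogeneous_dd (lenF_mul_sFin h ▸ ih)

theorem isStaircase (hS : SchubertProp n S) (π : Equiv.Perm (Fin n)) : IsStaircase n (S π) := by
  induction π using revPerm_induction with
  | rev => rw [hS.apply_revPerm]; exact isStaircase_codeMonomial_revPerm
  | ascent π k h _ ih =>
    rw [← hS.dd_apply_mul_sFin h]
    exact isStaircase_dd ih h.1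

theorem apply_eq_codeMonomial (hS : SchubertProp n S) (hπ : IsDominant π) :
    S π = codeMonomial π := by
  induction π using revPerm_induction with
  | rev => exact hS.apply_revPerm
  | ascent π k h hmin ih =>
    rw [← hS.dd_apply_mul_sFin h, ih (hπ.mul_sFin h hmin), hπ.codeMonomial_mul_sFin h,
      dd_X_mul_of_swapPoly_eq (hπ.swapPoly_codeMonomial h)]

theorem apply_one (hS : SchubertProp n S) : S 1 = 1 := by
  rw [hS.apply_eq_codeMonomial isDominant_one, codeMonomial_one]

theorem constantCoeff_apply (hS : SchubertProp n S) (hπ : lenF n π ≠ 0) :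
    constantCoeff (S π) = 0 :=
  (hS.isHomogeneous π).coeff_eq_zero (by simpa using hπ.symm)

theorem apply_eq_of_dd_eq (hS : SchubertProp n S) (hπ : lenF n π ≠ 0) {f : MvPolynomial ℕ ℤ}
    (hf : f ∈ supported ℤ {l | l + 1 < n}) (h0 : constantCoeff f = 0)
    (hdd : ∀ k, k + 1 < n → dd k (S π) = dd k f) : S π = f :=
  eq_of_dd_eq (hS.isStaircase π).mem_supported hf ((hS.constantCoeff_apply hπ).trans h0.symm) hdd

end SchubertProp

section TwoLetterWords

variable {n i j : ℕ}

/-- The reduced words of `s_i s_j` for `i ≠ j`: besides `(i, j)`, there is `(j, i)` if `s_i` and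
`s_j` commute. -/
def twoLetterWords (i j : ℕ) : Finset (ℕ × ℕ) :=
  if i = j + 1 ∨ j = i + 1 then {(i, j)} else {(i, j), (j, i)}

theorem mem_twoLetterWords (hi : i + 1 < n) (hj : j + 1 < n) (hij : i ≠ j) (w : ℕ × ℕ) :
    w ∈ twoLetterWords i j ↔
      w.1 + 1 < n ∧ w.2 + 1 < n ∧ sFin n w.1 * sFin n w.2 = sFin n i * sFin n j := by
  have hmem : w ∈ twoLetterWords i j ↔
      w.1 = i ∧ w.2 = j ∨ w.1 = j ∧ w.2 = i ∧ i ≠ j + 1 ∧ j ≠ i + 1 := by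
    unfold twoLetterWords
    split_ifs with h <;> simp only [Finset.mem_insert, Finset.mem_singleton, Prod.ext_iff] <;> tauto
  rw [hmem]
  constructor
  · intro h
    have hw : w.1 + 1 < n ∧ w.2 + 1 < n := by
      rcases h with ⟨h₁, h₂, -⟩ | ⟨h₁, h₂, -⟩ <;> omega
    exact ⟨hw.1, hw.2, (sFin_mul_sFin_eq_iff hi hj hw.1 hw.2 hij).mpr h⟩
  · rintro ⟨h₁, h₂, h⟩
    exact (sFin_mul_sFin_eq_iff hi hj h₁ h₂ hij).mp h

end TwoLetterWords

section CompleteHomogeneous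

/-- The complete homogeneous symmetric polynomial `h_d` in the first `m` variables, summed
according to the largest index occurring in a monomial. -/
noncomputable def completeHomogeneous : ℕ → ℕ → MvPolynomial ℕ ℤ
  | 0, _ => 1
  | d + 1, m => ∑ r ∈ Finset.range m, X r * completeHomogeneous d (r + 1)

theorem completeHomogeneous_zero (m : ℕ) : completeHomogeneous 0 m = 1 :=
  rfl

theorem completeHomogeneous_one (m : ℕ) :
    completeHomogeneous 1 m = ∑ r ∈ Finset.range m, X r := by
  simp only [completeHomogeneous, mul_one]

theorem completeHomogeneous_succ_succ (d m : ℕ) :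
    completeHomogeneous (d + 1) (m + 1) =
      completeHomogeneous (d + 1) m + X m * completeHomogeneous d (m + 1) :=
  Finset.sum_range_succ _ _

theorem constantCoeff_completeHomogeneous_succ (d m : ℕ) :
    constantCoeff (completeHomogeneous (d + 1) m) = 0 := by
  simp [completeHomogeneous]

theorem completeHomogeneous_mem_supported {s : Set ℕ} (d : ℕ) {m : ℕ} (hs : ∀ r < m, r ∈ s) :
    completeHomogeneous d m ∈ supported ℤ s := by
  induction d generalizing m with
  | zero => exact one_mem _
  | succ d ih =>
    refine sum_mem fun r hr => mul_mem ?_ (ih fun l hl => hs l ?_)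
    · exact X_mem_supported.mpr (hs r (Finset.mem_range.mp hr))
    · have := Finset.mem_range.mp hr
      omega

theorem dd_completeHomogeneous_succ (k d m : ℕ) :
    dd k (completeHomogeneous (d + 1) m) =
      if k + 1 = m then completeHomogeneous d (m + 1) else 0 := by
  induction d generalizing m with
  | zero =>
    induction m with
    | zero => exact dd_zero k
    | succ m ihm =>
      rw [completeHomogeneous_succ_succ, dd_add, ihm, dd_mul, dd_X]
      simp only [completeHomogeneous_zero, dd_one]
      split_ifs <;> first | omega | ring
  | succ d ihd =>
    induction m with
    | zero => exact dd_zero k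
    | succ m ihm =>
      rw [completeHomogeneous_succ_succ, dd_add, ihm, dd_mul, dd_X, ihd, swapPoly_X]
      rcases eq_or_ne m k with rfl | hmk
      · rw [completeHomogeneous_succ_succ d (m + 1)]
        simp
      · have hkm : k + 1 ≠ m + 1 := fun h => hmk (Nat.succ_injective h).symm
        split_ifs <;> first | omega | ring

theorem dd_completeHomogeneous_one_mul (k l m : ℕ) (hlm : l ≠ m) :
    dd k (completeHomogeneous 1 l * completeHomogeneous 1 m) =
      (if k + 1 = l then completeHomogeneous 1 m else 0) +
        if k + 1 = m then completeHomogeneous 1 l else 0 := by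
  rw [dd_mul, dd_completeHomogeneous_succ, dd_completeHomogeneous_succ]
  by_cases hm : k + 1 = m
  · have hl : k + 1 ≠ l := fun h => hlm (h.symm.trans hm)
    have hsymm : swapPoly k (completeHomogeneous 1 l) = completeHomogeneous 1 l :=
      dd_eq_zero_iff.mp ((dd_completeHomogeneous_succ k 0 l).trans (if_neg hl))
    rw [if_neg hl, if_pos hm, if_neg hl, if_pos hm, hsymm, completeHomogeneous_zero]
    ring
  · rw [if_neg hm, if_neg hm, completeHomogeneous_zero, mul_zero, ite_mul, one_mul, zero_mul]

end CompleteHomogeneous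

section CompatibleSum

/-- The index sequences `r₁ ≤ r₂` compatible with the word `(a, b)`. -/
def compatibleIndices (a b : ℕ) : Finset (ℕ × ℕ) :=
  (Finset.range (a + 1) ×ˢ Finset.range (b + 1)).filter
    fun r => r.1 ≤ r.2 ∧ (a < b → r.1 < r.2)

/-- The contribution of the word `(a, b)` to the sum over compatible sequences. -/
noncomputable def compatibleSum (a b : ℕ) : MvPolynomial ℕ ℤ :=
  ∑ r ∈ compatibleIndices a b, X r.1 * X r.2

theorem compatibleSum_of_le {a b : ℕ} (h : b ≤ a) :
    compatibleSum a b = completeHomogeneous 2 (b + 1) := by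
  rw [compatibleSum, completeHomogeneous, Finset.sum_finset_product_right _
    (Finset.range (b + 1)) fun r => Finset.range (r + 1)]
  · simp only [completeHomogeneous_one, Finset.mul_sum, mul_comm]
  · intro r
    simp only [compatibleIndices, Finset.mem_filter, Finset.mem_product, Finset.mem_range]
    omega

theorem compatibleSum_add_of_lt {a b : ℕ} (h : a < b) :
    compatibleSum a b + completeHomogeneous 2 (a + 1) =
      completeHomogeneous 1 (a + 1) * completeHomogeneous 1 (b + 1) := by
  rw [completeHomogeneous_one, completeHomogeneous_one, Finset.sum_mul_sum,
    ← Finset.sum_product', ← Finset.sum_filter_add_sum_filter_not _ fun r => r.1 < r.2]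
  congr 1
  · refine Finset.sum_congr (Finset.filter_congr fun r _ => ?_) fun _ _ => rfl
    simp only [h, forall_const, and_iff_right_of_imp le_of_lt]
  · rw [completeHomogeneous, Finset.sum_finset_product _
      (Finset.range (a + 1)) fun r => Finset.range (r + 1)]
    · simp only [completeHomogeneous_one, Finset.mul_sum]
    · intro r
      simp only [Finset.mem_filter, Finset.mem_product, Finset.mem_range]
      omega

theorem dd_compatibleSum_of_le (k : ℕ) {a b : ℕ} (h : b ≤ a) :
    dd k (compatibleSum a b) = if k = b then completeHomogeneous 1 (b + 2) else 0 := by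
  simp only [compatibleSum_of_le h, dd_completeHomogeneous_succ, add_left_inj]

theorem dd_compatibleSum_of_lt (k : ℕ) {a b : ℕ} (h : a < b) :
    dd k (compatibleSum a b) =
      (if k = a then completeHomogeneous 1 (b + 1) - completeHomogeneous 1 (a + 2) else 0) +
        if k = b then completeHomogeneous 1 (a + 1) else 0 := by
  rw [eq_sub_of_add_eq (compatibleSum_add_of_lt h), dd_sub,
    dd_completeHomogeneous_one_mul _ _ _ (by omega), dd_completeHomogeneous_succ]
  simp only [add_left_inj]
  split_ifs <;> ring

theorem constantCoeff_compatibleSum (a b : ℕ) : constantCoeff (compatibleSum a b) = 0 := by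
  simp [compatibleSum]

theorem compatibleSum_mem_supported {s : Set ℕ} {a b : ℕ} (ha : ∀ r ≤ a, r ∈ s)
    (hb : ∀ r ≤ b, r ∈ s) : compatibleSum a b ∈ supported ℤ s := by
  refine sum_mem fun r hr => ?_
  simp only [compatibleIndices, Finset.mem_filter, Finset.mem_product, Finset.mem_range,
    Nat.lt_succ_iff] at hr
  exact mul_mem (X_mem_supported.mpr (ha _ hr.1.1)) (X_mem_supported.mpr (hb _ hr.1.2))

theorem compatibleSum_add_compatibleSum_comm {a b : ℕ} (h : a ≠ b) :
    compatibleSum a b + compatibleSum b a =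
      completeHomogeneous 1 (a + 1) * completeHomogeneous 1 (b + 1) := by
  wlog hab : a < b generalizing a b
  · rw [add_comm, mul_comm, this h.symm (h.lt_or_gt.resolve_left hab)]
  · rw [compatibleSum_of_le hab.le, compatibleSum_add_of_lt hab]

theorem dd_sum_twoLetterWords_compatibleSum (k : ℕ) {i j : ℕ} (hij : i ≠ j) :
    dd k (∑ w ∈ twoLetterWords i j, compatibleSum w.1 w.2) =
      if k = j then completeHomogeneous 1 (i + 1)
      else if k = i ∧ i ≠ j + 1 ∧ j ≠ i + 1 then completeHomogeneous 1 (j + 1) else 0 := by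
  by_cases hadj : i = j + 1 ∨ j = i + 1
  · rw [twoLetterWords, if_pos hadj, Finset.sum_singleton]
    rcases hadj with rfl | rfl
    · rw [dd_compatibleSum_of_le k (Nat.le_succ j)]
      simp
    · rw [dd_compatibleSum_of_lt k (Nat.lt_succ_self i)]
      simp
  · rw [twoLetterWords, if_neg hadj, Finset.sum_pair (by simp [hij]),
      compatibleSum_add_compatibleSum_comm hij, dd_completeHomogeneous_one_mul _ _ _ (by omega)]
    simp only [add_left_inj]
    split_ifs <;> first | omega | simp

theorem finsum_compatPair_eq_sum {n : ℕ} {π : Equiv.Perm (Fin n)} (W : Finset (ℕ × ℕ))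
    (hW : ∀ w : ℕ × ℕ, w ∈ W ↔ w.1 + 1 < n ∧ w.2 + 1 < n ∧ sFin n w.1 * sFin n w.2 = π) :
    ∑ᶠ (p : (ℕ × ℕ) × ℕ × ℕ) (_ : CompatPair n π p), (X p.2.1 * X p.2.2 : MvPolynomial ℕ ℤ) =
      ∑ w ∈ W, compatibleSum w.1 w.2 := by
  set P := W.biUnion fun w => {w} ×ˢ compatibleIndices w.1 w.2
  have hP : ∀ p, p ∈ P ↔ p.1 ∈ W ∧ p.2 ∈ compatibleIndices p.1.1 p.1.2 := by
    simp [P]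
  rw [finsum_cond_eq_sum_of_cond_iff (t := P)]
  · exact Finset.sum_finset_product P W (fun w => compatibleIndices w.1 w.2) hP
  · rintro ⟨⟨a, b⟩, r, s⟩ -
    simp only [hP, hW, CompatPair, compatibleIndices, Finset.mem_filter, Finset.mem_product,
      Finset.mem_range, Nat.lt_succ_iff]
    tauto

end CompatibleSum

namespace SchubertProp

variable {n i j : ℕ} {S : Equiv.Perm (Fin n) → MvPolynomial ℕ ℤ}

theorem apply_sFin (hS : SchubertProp n S) (hi : i + 1 < n) :
    S (sFin n i) = completeHomogeneous 1 (i + 1) := by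
  refine hS.apply_eq_of_dd_eq (by rw [lenF_sFin hi]; exact one_ne_zero)
    (completeHomogeneous_mem_supported 1 fun r hr => ?_)
    (constantCoeff_completeHomogeneous_succ 0 _) fun k hk => ?_
  · simp only [Set.mem_ofPred_eq]
    omega
  · rw [dd_completeHomogeneous_succ]
    rcases eq_or_ne k i with rfl | hki
    · rw [if_pos rfl, ← one_mul (sFin n k), hS.dd_apply_mul_sFin (isAscent_one hk), hS.apply_one,
        completeHomogeneous_zero]
    · rw [if_neg fun h => hki (Nat.succ_injective h),
        hS.dd_apply_eq_zero ((isAscent_sFin hi hk).mpr hki)]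

theorem dd_apply_sFin_mul_sFin (hS : SchubertProp n S) (hi : i + 1 < n) (hj : j + 1 < n)
    (hij : i ≠ j) {k : ℕ} (hk : k + 1 < n) :
    dd k (S (sFin n i * sFin n j)) =
      if k = j then completeHomogeneous 1 (i + 1)
      else if k = i ∧ i ≠ j + 1 ∧ j ≠ i + 1 then completeHomogeneous 1 (j + 1) else 0 := by
  split_ifs with hkj hfar
  · rw [hkj, hS.dd_apply_mul_sFin ((isAscent_sFin hi hj).mpr hij.symm), hS.apply_sFin hi]
  · obtain ⟨rfl, h, h'⟩ := hfar
    rw [sFin_commute hi hj h h', hS.dd_apply_mul_sFin ((isAscent_sFin hj hi).mpr hij),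
      hS.apply_sFin hj]
  · exact hS.dd_apply_eq_zero (isAscent_sFin_mul_sFin hi hj hk hkj (by tauto))

theorem apply_sFin_mul_sFin (hS : SchubertProp n S) (hi : i + 1 < n) (hj : j + 1 < n)
    (hij : i ≠ j) :
    S (sFin n i * sFin n j) = ∑ w ∈ twoLetterWords i j, compatibleSum w.1 w.2 := by
  refine hS.apply_eq_of_dd_eq (by rw [lenF_sFin_mul_sFin hi hj hij]; exact two_ne_zero)
    (sum_mem fun w hw => ?_) ?_ fun k hk => ?_
  · obtain ⟨h₁, h₂, -⟩ := (mem_twoLetterWords hi hj hij w).mp hw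
    refine compatibleSum_mem_supported (fun r hr => ?_) fun r hr => ?_ <;>
      simp only [Set.mem_ofPred_eq] <;> omega
  · rw [map_sum, Finset.sum_eq_zero fun w _ => constantCoeff_compatibleSum w.1 w.2]
  · rw [hS.dd_apply_sFin_mul_sFin hi hj hij hk, dd_sum_twoLetterWords_compatibleSum k hij]

end SchubertProp

/-- For `π = s_i s_j` of length 2, the Schubert polynomial `𝔖_π` equals the sum of the
monomials `x_{r₁} x_{r₂}` over all compatible sequences of `π`. -/
theorem schubert_eq_sum_compatible_length_two (n : ℕ)
    (S : Equiv.Perm (Fin n) → MvPolynomial ℕ ℤ) (hS : SchubertProp n S)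
    (i j : ℕ) (hi : i + 1 < n) (hj : j + 1 < n) (π : Equiv.Perm (Fin n))
    (hπ : π = sFin n i * sFin n j) (hlen : lenF n π = 2) :
    S π = ∑ᶠ (p : (ℕ × ℕ) × ℕ × ℕ) (_ : CompatPair n π p), X p.2.1 * X p.2.2 := by
  subst hπ
  have hij : i ≠ j := by
    rintro rfl
    rw [sFin_mul_self, lenF_one] at hlen
    exact two_ne_zero hlen.symm
  rw [hS.apply_sFin_mul_sFin hi hj hij, finsum_compatPair_eq_sum (twoLetterWords i j)
    (mem_twoLetterWords hi hj hij)]
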